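/- arXiv:2511.10777 — 2 statements merged into one kernel-verified Lean document; each statement's English description precedes it below -/
import Mathlib

section
/- Let n, m, d, k be positive integers and 0 < ε ≤ 1, with ⌈εk'⌉ ≤ k' and k' + ⌈εk'⌉ ≤ n for all 1 ≤ k' ≤ k. Every (n,m,d,k,ε,1)-strongly list union-free binary matrix M ∈ {0,1}^{m×n} is (k,ε)-strongly-distinguishable. -/
/-!
For a set `X` of `k + l` columns, list union-freeness at `(k, l)` rules out `l` columns of `X` each
covered by the rest of `X`: such columns would form `S`, with `T` the rest of `X`. So more than `k`
columns of `X` are isolated. Isolation survives shrinking `X`, so the bound on the number of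
non-isolated columns carries over to the subsets of `X`.

To treat supports of size `p`, it suffices to find `q ≤ p` with `p ≤ q + ⌈εq⌉ ≤ n` and to apply
list union-freeness at `q`. As `q ↦ q + ⌈εq⌉` starts at `0` and grows by steps of at most `2`, the
least `q` with `p ≤ q + ⌈εq⌉` satisfies `q + ⌈εq⌉ ≤ p + 1`, so `p < n` is enough.
-/

open scoped Classical

/-- The support of column `j` of a binary matrix `M`. -/
def colSupp {m n : ℕ} (M : Fin m → Fin n → Bool) (j : Fin n) : Finset (Fin m) :=
  Finset.univ.filter fun i => M i j = true

/-- The support of row `i` of a binary matrix `M`. -/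
def rowSupp {m n : ℕ} (M : Fin m → Fin n → Bool) (i : Fin m) : Finset (Fin n) :=
  Finset.univ.filter fun j => M i j = true

/-- The support of a binary vector. -/
def bsupp {n : ℕ} (x : Fin n → Bool) : Finset (Fin n) :=
  Finset.univ.filter fun j => x j = true

/-- `M` is an `(n,m,d,k,l,α)`-list union-free matrix. -/
def ListUF (n m d k l : ℕ) (α : ℝ) (M : Fin m → Fin n → Bool) : Prop :=
  (∀ j, (colSupp M j).card = d) ∧
  ∀ S T : Finset (Fin n), Disjoint S T → S.card = l → T.card = k →
    ∃ j ∈ S,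
      (((colSupp M j) ∩ (((S ∪ T).erase j).biUnion (colSupp M))).card : ℝ) < α * d

/-- `M` is `(n,m,d,k,ε,α)`-strongly list union-free: it is
`(n,m,d,k',⌈εk'⌉,α)`-list union-free for every `1 ≤ k' ≤ k`. -/
def StronglyListUF (n m d k : ℕ) (ε α : ℝ) (M : Fin m → Fin n → Bool) : Prop :=
  ∀ k', 1 ≤ k' → k' ≤ k → ListUF n m d k' ⌈ε * (k' : ℝ)⌉₊ α M

/-- `M` is `(k,l)`-distinguishable. -/
def Distinguishable {m n : ℕ} (k l : ℕ) (M : Fin m → Fin n → Bool) : Prop :=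
  ∀ x : Fin n → Bool, (bsupp x).card = k →
    k - l <
      ((bsupp x).filter fun i => ∃ j : Fin m, rowSupp M j ∩ bsupp x = {i}).card

/-- `M` is `(k,ε)`-strongly-distinguishable: it is `(k',⌈εk'⌉)`-distinguishable
for every `1 ≤ k' ≤ k`. -/
def StronglyDistinguishable {m n : ℕ} (k : ℕ) (ε : ℝ) (M : Fin m → Fin n → Bool) : Prop :=
  ∀ k', 1 ≤ k' → k' ≤ k → Distinguishable k' ⌈ε * (k' : ℝ)⌉₊ M

section Isolated

variable {m n : ℕ} {M : Fin m → Fin n → Bool} {X Y : Finset (Fin n)}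

/-- The columns of `X` singled out by some row, that is, the columns of `X` in which some row of `M`
has its only nonzero entry within `X`. Distinguishability is a lower bound on their number. -/
def isolatedCols (M : Fin m → Fin n → Bool) (X : Finset (Fin n)) : Finset (Fin n) :=
  X.filter fun j => ∃ r : Fin m, rowSupp M r ∩ X = {j}

theorem mem_rowSupp_iff_mem_colSupp {r : Fin m} {j : Fin n} :
    j ∈ rowSupp M r ↔ r ∈ colSupp M j := by
  simp [rowSupp, colSupp]

theorem mem_isolatedCols_iff_not_subset_biUnion {j : Fin n} :
    j ∈ isolatedCols M X ↔ j ∈ X ∧ ¬ colSupp M j ⊆ (X.erase j).biUnion (colSupp M) := by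
  rw [isolatedCols, Finset.mem_filter]
  refine and_congr_right fun hj => ?_
  rw [Finset.not_subset]
  refine exists_congr fun r => ?_
  simp only [Finset.eq_singleton_iff_unique_mem, Finset.mem_inter, Finset.mem_biUnion,
    Finset.mem_erase, mem_rowSupp_iff_mem_colSupp]
  grind

theorem isolatedCols_subset : isolatedCols M X ⊆ X :=
  Finset.filter_subset _ _

theorem isolatedCols_inter_subset_of_subset (hXY : X ⊆ Y) :
    isolatedCols M Y ∩ X ⊆ isolatedCols M X := by
  intro j hj
  obtain ⟨hjY, hjX⟩ := Finset.mem_inter.1 hj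
  rw [mem_isolatedCols_iff_not_subset_biUnion] at hjY ⊢
  exact ⟨hjX, fun hcov => hjY.2 (hcov.trans
    (Finset.biUnion_subset_biUnion_of_subset_left _ (Finset.erase_subset_erase j hXY)))⟩

theorem card_isolatedCols_le_add_card_sdiff (hXY : X ⊆ Y) :
    (isolatedCols M Y).card ≤ (isolatedCols M X).card + (Y \ X).card :=
  calc (isolatedCols M Y).card
      = (isolatedCols M Y ∩ X).card + (isolatedCols M Y \ X).card :=
        (Finset.card_inter_add_card_sdiff _ _).symm
    _ ≤ (isolatedCols M X).card + (Y \ X).card :=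
        add_le_add (Finset.card_le_card (isolatedCols_inter_subset_of_subset hXY))
          (Finset.card_le_card (Finset.sdiff_subset_sdiff isolatedCols_subset le_rfl))

end Isolated

section Distinguishable

variable {m n k k' l l' : ℕ} {M : Fin m → Fin n → Bool}

theorem distinguishable_iff_lt_card_isolatedCols :
    Distinguishable k l M ↔
      ∀ X : Finset (Fin n), X.card = k → k - l < (isolatedCols M X).card := by
  refine ⟨fun h X hX => ?_, fun h x => h (bsupp x)⟩
  have hsupp : bsupp (fun j => decide (j ∈ X)) = X := by simp [bsupp]
  simpa only [hsupp, isolatedCols] using h (fun j => decide (j ∈ X)) (hsupp.symm ▸ hX)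

theorem Distinguishable.mono_right (h : Distinguishable k l M) (hl : l ≤ l') :
    Distinguishable k l' M :=
  fun x hx => (Nat.sub_le_sub_left hl k).trans_lt (h x hx)

theorem Distinguishable.anti_left (h : Distinguishable k l M) (hlk' : l ≤ k') (hk' : k' ≤ k)
    (hkn : k ≤ n) : Distinguishable k' l M := by
  rw [distinguishable_iff_lt_card_isolatedCols] at h ⊢
  intro X hX
  obtain ⟨Y, hXY, hY⟩ := Finset.exists_superset_card_eq (hX.trans_le hk') (by simpa using hkn)
  have hisolated := h Y hY
  have hloss := card_isolatedCols_le_add_card_sdiff (M := M) hXY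
  rw [Finset.card_sdiff_of_subset hXY] at hloss
  omega

end Distinguishable

section ListUF

variable {n m d k l : ℕ} {α : ℝ} {M : Fin m → Fin n → Bool}

theorem ListUF.exists_mem_isolatedCols (hM : ListUF n m d k l α M) (hα : α ≤ 1)
    {S T : Finset (Fin n)} (hST : Disjoint S T) (hS : S.card = l) (hT : T.card = k) :
    ∃ j ∈ S, j ∈ isolatedCols M (S ∪ T) := by
  obtain ⟨hweight, huf⟩ := hM
  obtain ⟨j, hjS, hj⟩ := huf S T hST hS hT
  refine ⟨j, hjS,
    mem_isolatedCols_iff_not_subset_biUnion.2 ⟨Finset.mem_union_left T hjS, fun hcov => ?_⟩⟩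
  rw [Finset.inter_eq_left.2 hcov, hweight j] at hj
  exact hj.not_ge (mul_le_of_le_one_left d.cast_nonneg hα)

theorem ListUF.distinguishable_add (hM : ListUF n m d k l α M) (hα : α ≤ 1) :
    Distinguishable (k + l) l M := by
  rw [distinguishable_iff_lt_card_isolatedCols, Nat.add_sub_cancel]
  intro X hX
  by_contra! hfew
  have hmany : l ≤ (X \ isolatedCols M X).card := by
    rw [Finset.card_sdiff_of_subset isolatedCols_subset]
    omega
  obtain ⟨S, hS, hSl⟩ := Finset.exists_subset_card_eq hmany
  have hSX : S ⊆ X := hS.trans Finset.sdiff_subset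
  have hTk : (X \ S).card = k := by
    rw [Finset.card_sdiff_of_subset hSX]
    omega
  obtain ⟨j, hjS, hj⟩ := hM.exists_mem_isolatedCols hα Finset.disjoint_sdiff hSl hTk
  rw [Finset.union_sdiff_of_subset hSX] at hj
  exact (Finset.mem_sdiff.1 (hS hjS)).2 hj

end ListUF

theorem exists_le_add_apply_le_succ {c : ℕ → ℕ} (hzero : c 0 = 0)
    (hstep : ∀ q, c (q + 1) ≤ c q + 1) (p : ℕ) :
    ∃ q ≤ p, p ≤ q + c q ∧ q + c q ≤ p + 1 := by
  have hex : ∃ q, p ≤ q + c q := ⟨p, Nat.le_add_right p (c p)⟩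
  refine ⟨Nat.find hex, Nat.find_min' hex (Nat.le_add_right p (c p)), Nat.find_spec hex, ?_⟩
  rcases hq : Nat.find hex with _ | q
  · simp [hzero]
  · have hlt : ¬ p ≤ q + c q := Nat.find_min hex (by omega)
    have hq_step := hstep q
    omega

theorem ceil_mul_succ_le {ε : ℝ} (hε1 : ε ≤ 1) (q : ℕ) :
    ⌈ε * ((q + 1 : ℕ) : ℝ)⌉₊ ≤ ⌈ε * (q : ℝ)⌉₊ + 1 := by
  rw [Nat.ceil_le]
  push_cast
  linarith [Nat.le_ceil (ε * (q : ℝ))]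

theorem stronglyListUF_is_stronglyDistinguishable_general {n m d k : ℕ} {ε α : ℝ}
    {M : Fin m → Fin n → Bool} (hkn : k < n) (hε0 : 0 ≤ ε) (hε1 : ε ≤ 1) (hα : α ≤ 1)
    (hM : StronglyListUF n m d k ε α M) : StronglyDistinguishable k ε M := by
  intro p hp hpk
  obtain ⟨q, hqp, hpq, hqp'⟩ := exists_le_add_apply_le_succ
    (c := fun q : ℕ => ⌈ε * (q : ℝ)⌉₊) (by simp) (ceil_mul_succ_le hε1) p
  have hq : 1 ≤ q := by
    rw [Nat.one_le_iff_ne_zero]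
    rintro rfl
    simp only [Nat.cast_zero, mul_zero, Nat.ceil_zero, add_zero] at hpq
    omega
  have hceil_le : ⌈ε * (q : ℝ)⌉₊ ≤ ⌈ε * (p : ℝ)⌉₊ := by gcongr
  have hceil_le_self : ⌈ε * (p : ℝ)⌉₊ ≤ p :=
    Nat.ceil_le.2 (mul_le_of_le_one_left p.cast_nonneg hε1)
  exact (((hM q hq (hqp.trans hpk)).distinguishable_add hα).anti_left
    (hceil_le.trans hceil_le_self) hpq (by omega)).mono_right hceil_le

/-- Every `(n,m,d,k,ε,1)`-strongly list union-free binary matrix is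
`(k,ε)`-strongly-distinguishable. -/
theorem stronglyListUF_is_stronglyDistinguishable (n m d k : ℕ)
    (hn : 0 < n) (hm : 0 < m) (hd : 0 < d) (hk : 0 < k)
    (ε : ℝ) (hε0 : 0 < ε) (hε1 : ε ≤ 1)
    (hceil : ∀ k', 1 ≤ k' → k' ≤ k → ⌈ε * (k' : ℝ)⌉₊ ≤ k')
    (hsum : ∀ k', 1 ≤ k' → k' ≤ k → k' + ⌈ε * (k' : ℝ)⌉₊ ≤ n)
    (M : Fin m → Fin n → Bool) (hM : StronglyListUF n m d k ε 1 M) :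
    StronglyDistinguishable k ε M := by
  have hceil_pos : 0 < ⌈ε * (k : ℝ)⌉₊ := Nat.ceil_pos.2 (by positivity)
  exact stronglyListUF_is_stronglyDistinguishable_general
    ((Nat.lt_add_of_pos_right hceil_pos).trans_le (hsum k hk le_rfl)) hε0.le hε1 le_rfl hM
end

section
/- Fix α > 1 and δ > 0, and set k_α := ⌈α·log(16k)/log log(16k)⌉. There exists k₀ such that for all k ≥ k₀ and all n ≥ k with m := 16·k_α·k·⌈log₂ n⌉, there exist a finitely supported probability distribution μ over matrices A ∈ ℝ^{m×n} and a decoding map f : ℝ^{m×n} × {0,1}^m → (finite subsets of [n]) such that for every fixed x ∈ ℝ^n with 1 ≤ |supp(x)| ≤ k, the probability over A ∼ μ that f(A, nz(Ax)) ≠ supp(x) is at most ⌈log₂ n⌉·(16k)^{1−α+δ} + e^{−k} + n^{−k} + 5k^{−3}. -/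
/-!
Draw the entries of the matrix independently, each nonzero with probability `1 / (2k)` and, when
nonzero, uniform in `{1, …, N}`. A row that selects some coordinate of the support measures zero
with probability at most `1 / N`, so for large `N` the bit `nz(Ax) i` is, with high probability, the
disjunction of the support bits selected by row `i`, as in group testing: random values play the
part of the paper's sub-totally invertible blocks. A coordinate outside the support is then refuted
by any row that selects it and nothing from the support; a given row does so with probability at
least `1 / (4k)`, so all `m` rows fail to refute it with probability at most `exp (-m / (4k))`,
which for `m ≥ 16 k ⌈log₂ n⌉` is at most `n⁻⁴`.
-/


open scoped Classical

noncomputable section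

/-- The entrywise "nonzero" map: `nz(y) ∈ {0,1}^m` records which entries of `y` are
nonzero. -/
def nzVec {m : ℕ} (y : Fin m → ℝ) : Fin m → Bool :=
  fun i => if y i = 0 then false else true

/-- The support of a real vector, as a finite set of coordinates. -/
def rsupp {n : ℕ} (x : Fin n → ℝ) : Finset (Fin n) :=
  Finset.univ.filter fun j => x j ≠ 0

section UniformProb

variable {Ω Ω' ι β : Type*} [Fintype Ω] [Fintype Ω'] {p q : Ω → Prop}

/-- The probability of the event `p` under the uniform distribution on the finite type `Ω`
(equal to `0` when `Ω` is empty). -/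
def uniformProb (p : Ω → Prop) : ℝ :=
  (Finset.univ.filter p).dens

lemma uniformProb_eq_dens (p : Ω → Prop) [DecidablePred p] :
    uniformProb p = ((Finset.univ.filter p).dens : ℝ) := by
  unfold uniformProb
  congr

lemma uniformProb_eq_card_div_card (p : Ω → Prop) [DecidablePred p] :
    uniformProb p = ((Finset.univ.filter p).card : ℝ) / Fintype.card Ω := by
  rw [uniformProb_eq_dens, Finset.nnratCast_dens]

lemma uniformProb_nonneg (p : Ω → Prop) : 0 ≤ uniformProb p := by
  unfold uniformProb
  positivity

lemma uniformProb_true [Nonempty Ω] : uniformProb (fun _ : Ω => True) = 1 := by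
  simp [uniformProb_eq_dens]

lemma uniformProb_eq_zero (h : ∀ ω, ¬ p ω) : uniformProb p = 0 := by
  simp [uniformProb, h]

lemma uniformProb_mono (h : ∀ ω, p ω → q ω) : uniformProb p ≤ uniformProb q := by
  unfold uniformProb
  exact_mod_cast Finset.dens_le_dens (Finset.monotone_filter_right _ fun ω _ => h ω)

lemma uniformProb_or_le (p q : Ω → Prop) :
    uniformProb (fun ω => p ω ∨ q ω) ≤ uniformProb p + uniformProb q := by
  simp only [uniformProb_eq_dens, Finset.filter_or]
  exact_mod_cast Finset.dens_union_le _ _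

lemma uniformProb_exists_mem_le (s : Finset ι) (p : ι → Ω → Prop) :
    uniformProb (fun ω => ∃ i ∈ s, p i ω) ≤ ∑ i ∈ s, uniformProb (p i) := by
  have hunion : (Finset.univ.filter fun ω => ∃ i ∈ s, p i ω)
      = s.biUnion fun i => Finset.univ.filter (p i) := by
    ext ω
    simp
  simp only [uniformProb_eq_dens, hunion]
  exact_mod_cast Finset.dens_biUnion_le

lemma uniformProb_not [Nonempty Ω] (p : Ω → Prop) :
    uniformProb (fun ω => ¬ p ω) = 1 - uniformProb p := by
  have h : uniformProb p + uniformProb (fun ω => ¬ p ω) = 1 := by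
    simp only [uniformProb_eq_dens]
    exact_mod_cast (Finset.dens_filter_add_dens_filter_not_eq_dens p).trans Finset.dens_univ
  exact eq_sub_of_add_eq' h

lemma uniformProb_forall_apply [Fintype ι] [DecidableEq ι] (p : ι → Ω → Prop) :
    uniformProb (fun ω : ι → Ω => ∀ i, p i (ω i)) = ∏ i, uniformProb (p i) := by
  have hpi : (Finset.univ.filter fun ω : ι → Ω => ∀ i, p i (ω i))
      = Fintype.piFinset fun i => Finset.univ.filter (p i) := by
    ext ω
    simp
  simp only [uniformProb_eq_card_div_card, hpi, Fintype.card_piFinset, Finset.prod_div_distrib,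
    Fintype.card_pi, Nat.cast_prod]

lemma uniformProb_comp_equiv (e : Ω ≃ Ω') (p : Ω' → Prop) :
    uniformProb (fun ω => p (e ω)) = uniformProb p := by
  rw [uniformProb_eq_dens, uniformProb_eq_dens, ← Finset.dens_map_equiv e]
  congr 2
  ext ω
  simp

lemma uniformProb_prod_le [Nonempty Ω'] {p : Ω × Ω' → Prop} {η : ℝ}
    (h : ∀ b, uniformProb (fun a => p (a, b)) ≤ η) : uniformProb p ≤ η := by
  have hcard : ((Finset.univ.filter p).card : ℝ)
      = ∑ b, ((Finset.univ.filter fun a => p (a, b)).card : ℝ) := by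
    simp only [Finset.card_filter, Fintype.sum_prod_type_right, Nat.cast_sum]
  calc uniformProb p
      = (∑ b, uniformProb fun a => p (a, b)) / Fintype.card Ω' := by
        simp only [uniformProb_eq_card_div_card, hcard, ← Finset.sum_div, Fintype.card_prod,
          Nat.cast_mul, div_div]
    _ ≤ (∑ _b : Ω', η) / Fintype.card Ω' := by
        gcongr with b
        exact h b
    _ = η := by simp

/-- Resampling one coordinate preserves the uniform distribution, so it suffices to bound the
conditional probability given all other coordinates. -/
lemma uniformProb_le_of_forall_update [Fintype ι] [DecidableEq ι] [Nonempty Ω]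
    {p : (ι → Ω) → Prop} {η : ℝ} (i : ι)
    (h : ∀ ω, uniformProb (fun a => p (Function.update ω i a)) ≤ η) :
    uniformProb p ≤ η := by
  rw [← uniformProb_comp_equiv (Equiv.funSplitAt i Ω).symm]
  refine uniformProb_prod_le fun b => ?_
  obtain ⟨a₀⟩ := ‹Nonempty Ω›
  convert h ((Equiv.funSplitAt i Ω).symm (a₀, b)) using 4 with a
  ext l
  by_cases hl : l = i
  · subst hl
    simp
  · simp [hl]

lemma sum_image_ite_uniformProb_eq [DecidableEq β] (g : Ω → β) (P : β → Prop) [DecidablePred P] :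
    (∑ b ∈ Finset.univ.image g, if P b then uniformProb (fun ω => g ω = b) else 0)
      = uniformProb fun ω => P (g ω) := by
  have hfiber : ∀ b, P b → (Finset.univ.filter fun ω => P (g ω)).filter (fun ω => g ω = b)
      = Finset.univ.filter fun ω => g ω = b := by
    rintro b hb
    ext ω
    simp only [Finset.mem_filter, Finset.mem_univ, true_and, and_iff_right_iff_imp]
    rintro rfl
    exact hb
  have hmaps : ∀ ω ∈ Finset.univ.filter fun ω => P (g ω),
      g ω ∈ (Finset.univ.image g).filter P := fun ω hω => by simpa using hω
  rw [uniformProb_eq_card_div_card, Finset.card_eq_sum_card_fiberwise hmaps, ← Finset.sum_filter,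
    Nat.cast_sum, Finset.sum_div]
  refine Finset.sum_congr rfl fun b hb => ?_
  rw [hfiber b (Finset.mem_filter.1 hb).2, uniformProb_eq_card_div_card]

end UniformProb

section Decoder

variable {m n : ℕ}

lemma nzVec_eq_true {y : Fin m → ℝ} {i : Fin m} : nzVec y i = true ↔ y i ≠ 0 := by
  simp [nzVec]

lemma mem_rsupp {x : Fin n → ℝ} {j : Fin n} : j ∈ rsupp x ↔ x j ≠ 0 := by
  simp [rsupp]

/-- The group-testing cover decoder: it returns the coordinates that are selected by no vanishing
measurement. -/
def coverDecoder (B : Matrix (Fin m) (Fin n) ℝ) (y : Fin m → Bool) : Finset (Fin n) :=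
  Finset.univ.filter fun j => ∀ i, B i j ≠ 0 → y i = true

/-- The row `r` isolates the coordinate `j` from the set `S`: it selects `j` and avoids `S`. -/
def Isolates {κ R : Type*} [Zero R] (r : κ → R) (S : Finset κ) (j : κ) : Prop :=
  r j ≠ 0 ∧ ∀ l ∈ S, r l = 0

lemma Isolates.dotProduct_eq_zero {r x : Fin n → ℝ} {j : Fin n}
    (h : Isolates r (rsupp x) j) : r ⬝ᵥ x = 0 := by
  refine Finset.sum_eq_zero fun l _ => ?_
  by_cases hl : l ∈ rsupp x
  · rw [h.2 l hl, zero_mul]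
  · rw [not_not.1 (mt mem_rsupp.2 hl), mul_zero]

lemma coverDecoder_nzVec_mulVec_eq_rsupp {B : Matrix (Fin m) (Fin n) ℝ} {x : Fin n → ℝ}
    (hcancel : ∀ i, ∀ j ∈ rsupp x, B i j ≠ 0 → B i ⬝ᵥ x ≠ 0)
    (hisolate : ∀ j ∉ rsupp x, ∃ i, Isolates (B i) (rsupp x) j) :
    coverDecoder B (nzVec (B.mulVec x)) = rsupp x := by
  ext j
  simp only [coverDecoder, Finset.mem_filter, Finset.mem_univ, true_and, nzVec_eq_true]
  refine ⟨fun h => ?_, fun hj i => hcancel i j hj⟩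
  by_contra hj
  obtain ⟨i, hi⟩ := hisolate j hj
  exact h i hi.1 hi.dotProduct_eq_zero

end Decoder

section RandomRow

variable {E κ R : Type*} [Fintype E] [Nonempty E] [Fintype κ] [DecidableEq κ]

lemma uniformProb_dotProduct_eq_zero_le [Ring R] [NoZeroDivisors R] {v : E → R} {η : ℝ}
    (hη : ∀ c ≠ 0, uniformProb (fun e => v e = c) ≤ η) {x : κ → R} {j : κ} (hj : x j ≠ 0) :
    uniformProb (fun r : κ → E => v (r j) ≠ 0 ∧ (v ∘ r) ⬝ᵥ x = 0) ≤ η := by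
  refine uniformProb_le_of_forall_update j fun r => ?_
  have hsplit : ∀ a, (v ∘ Function.update r j a) ⬝ᵥ x
      = v a * x j + ∑ l ∈ Finset.univ.erase j, v (r l) * x l := fun a => by
    rw [dotProduct, ← Finset.add_sum_erase _ _ (Finset.mem_univ j)]
    congr 1
    · simp
    · refine Finset.sum_congr rfl fun l hl => ?_
      simp [Finset.ne_of_mem_erase hl]
  simp only [hsplit, Function.update_self]
  by_cases h : ∃ a, v a ≠ 0 ∧ v a * x j + ∑ l ∈ Finset.univ.erase j, v (r l) * x l = 0
  · obtain ⟨a, ha, ha0⟩ := h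
    refine (uniformProb_mono fun b hb => ?_).trans (hη (v a) ha)
    exact mul_right_cancel₀ hj (add_right_cancel (hb.2.trans ha0.symm))
  · rw [uniformProb_eq_zero (not_exists.1 h)]
    exact (uniformProb_nonneg _).trans (hη _ hj)

lemma uniformProb_isolates [Zero R] {v : E → R} {p : ℝ}
    (hp : uniformProb (fun e => v e ≠ 0) = p) {S : Finset κ} {j : κ} (hj : j ∉ S) :
    uniformProb (fun r : κ → E => Isolates (v ∘ r) S j) = p * (1 - p) ^ S.card := by
  have hcoord : ∀ r : κ → E, Isolates (v ∘ r) S j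
      ↔ ∀ l, (l = j → v (r l) ≠ 0) ∧ (l ∈ S → v (r l) = 0) := fun r => by
    simp [Isolates, forall_and]
  have hzero : uniformProb (fun e => v e = 0) = 1 - p := by
    simpa [hp] using uniformProb_not fun e => v e ≠ 0
  have hprob : ∀ l, uniformProb (fun e => (l = j → v e ≠ 0) ∧ (l ∈ S → v e = 0))
      = (if l = j then p else 1) * (if l ∈ S then 1 - p else 1) := fun l => by
    by_cases hlj : l = j
    · subst hlj
      simp [hj, hp]
    · by_cases hlS : l ∈ S <;> simp [hlj, hlS, hzero, uniformProb_true]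
  simp only [hcoord]
  rw [uniformProb_forall_apply fun l e => (l = j → v e ≠ 0) ∧ (l ∈ S → v e = 0)]
  simp only [hprob, Finset.prod_mul_distrib, Finset.prod_ite_eq', Finset.mem_univ, if_true,
    Finset.prod_ite_mem, Finset.univ_inter, Finset.prod_const]

end RandomRow

section RandomMatrix

variable {E : Type*} {m n : ℕ}

/-- The matrix with entries `v (ω i j)`. For uniform `ω` its entries are independent, each
distributed as the image of the uniform distribution on `E` under `v`. -/
def randomMatrix (v : E → ℝ) (ω : Fin m → Fin n → E) : Matrix (Fin m) (Fin n) ℝ :=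
  Matrix.of fun i => v ∘ ω i

lemma randomMatrix_row (v : E → ℝ) (ω : Fin m → Fin n → E) (i : Fin m) :
    randomMatrix v ω i = v ∘ ω i :=
  rfl

variable [Fintype E] [Nonempty E]

lemma uniformProb_exists_cancellation_le {v : E → ℝ} {η : ℝ}
    (hη : ∀ c ≠ 0, uniformProb (fun e => v e = c) ≤ η) (x : Fin n → ℝ) :
    uniformProb (fun ω : Fin m → Fin n → E => ∃ c ∈ Finset.univ ×ˢ rsupp x,
        randomMatrix v ω c.1 c.2 ≠ 0 ∧ randomMatrix v ω c.1 ⬝ᵥ x = 0)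
      ≤ m * (rsupp x).card * η := by
  refine (uniformProb_exists_mem_le _ _).trans ?_
  calc _ ≤ ∑ _c ∈ (Finset.univ : Finset (Fin m)) ×ˢ rsupp x, η := by
        refine Finset.sum_le_sum fun c hc => ?_
        refine uniformProb_le_of_forall_update c.1 fun ω => ?_
        simpa [randomMatrix_row] using uniformProb_dotProduct_eq_zero_le hη
          (mem_rsupp.1 (Finset.mem_product.1 hc).2)
    _ = m * (rsupp x).card * η := by simp [Finset.card_product]

lemma uniformProb_exists_not_isolated_le {v : E → ℝ} {p : ℝ}
    (hp : uniformProb (fun e => v e ≠ 0) = p) (S : Finset (Fin n)) :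
    uniformProb (fun ω : Fin m → Fin n → E =>
        ∃ j ∈ Sᶜ, ∀ i, ¬ Isolates (randomMatrix v ω i) S j)
      ≤ Sᶜ.card * (1 - p * (1 - p) ^ S.card) ^ m := by
  refine (uniformProb_exists_mem_le _ _).trans_eq ?_
  have hcoord : ∀ j ∈ Sᶜ, uniformProb (fun ω : Fin m → Fin n → E =>
      ∀ i, ¬ Isolates (randomMatrix v ω i) S j) = (1 - p * (1 - p) ^ S.card) ^ m := by
    intro j hj
    rw [← uniformProb_isolates hp (Finset.mem_compl.1 hj), ← uniformProb_not]
    simpa [randomMatrix_row] using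
      uniformProb_forall_apply fun (_ : Fin m) r => ¬ Isolates (v ∘ r) S j
  rw [Finset.sum_congr rfl hcoord, Finset.sum_const, nsmul_eq_mul]

lemma uniformProb_coverDecoder_ne_rsupp_le {v : E → ℝ} {p η : ℝ}
    (hp : uniformProb (fun e => v e ≠ 0) = p)
    (hη : ∀ c ≠ 0, uniformProb (fun e => v e = c) ≤ η) (x : Fin n → ℝ) :
    uniformProb (fun ω : Fin m → Fin n → E =>
        coverDecoder (randomMatrix v ω) (nzVec ((randomMatrix v ω).mulVec x)) ≠ rsupp x)
      ≤ m * (rsupp x).card * η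
        + (rsupp x)ᶜ.card * (1 - p * (1 - p) ^ (rsupp x).card) ^ m := by
  refine (uniformProb_mono fun ω hω => ?_).trans ((uniformProb_or_le _ _).trans <|
    add_le_add (uniformProb_exists_cancellation_le hη x)
      (uniformProb_exists_not_isolated_le hp (rsupp x)))
  by_contra hgood
  push Not at hgood
  exact hω (coverDecoder_nzVec_mulVec_eq_rsupp
    (fun i j hj => hgood.1 (i, j) (by simpa using hj))
    (fun j hj => hgood.2 j (Finset.mem_compl.2 hj)))

end RandomMatrix

lemma one_sub_mul_pow_le_exp {k s m : ℕ} (hk : 0 < k) (hs : s ≤ k) :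
    (1 - 1 / (2 * k) * (1 - 1 / (2 * k)) ^ s : ℝ) ^ m ≤ Real.exp (-(m / (4 * k))) := by
  have hk' : (1 : ℝ) ≤ k := by exact_mod_cast hk
  have hp : (1 : ℝ) / (2 * k) ≤ 1 / 2 := by
    gcongr
    linarith
  have hp0 : (0 : ℝ) ≤ 1 / (2 * k) := by positivity
  have havoid : (1 : ℝ) / 2 ≤ (1 - 1 / (2 * k)) ^ s := calc
    (1 : ℝ) / 2 = 1 + k * (-(1 / (2 * k))) := by field_simp; norm_num
    _ ≤ (1 + -(1 / (2 * k : ℝ))) ^ k := one_add_mul_le_pow (by linarith) k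
    _ = (1 - 1 / (2 * k)) ^ k := by rw [← sub_eq_add_neg]
    _ ≤ (1 - 1 / (2 * k)) ^ s := pow_le_pow_of_le_one (by linarith) (by linarith) hs
  have havoid' : (1 - 1 / (2 * k) : ℝ) ^ s ≤ 1 := pow_le_one₀ (by linarith) (by linarith)
  calc _ ≤ (1 - 1 / (4 * k) : ℝ) ^ m := by
        gcongr
        · nlinarith
        · calc (1 : ℝ) / (4 * k) = 1 / (2 * k) * (1 / 2) := by field_simp; norm_num
            _ ≤ _ := by gcongr
    _ ≤ Real.exp (-(1 / (4 * k))) ^ m := by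
        gcongr
        · have : (1 : ℝ) / (4 * k) = 1 / (2 * k) / 2 := by field_simp; norm_num
          linarith
        · exact Real.one_sub_le_exp_neg _
    _ = Real.exp (-(m / (4 * k))) := by
        rw [← Real.exp_nat_mul]
        ring_nf

section SparseEntry

variable {q N : ℕ}

/-- The real entry encoded by a pair, chosen so that a uniform pair gives `0` with probability
`1 - 1 / q` and each of `1, …, N` with probability `1 / (q * N)`. -/
def sparseEntry (e : Fin q × Fin N) : ℝ :=
  if e.1.val = 0 then (e.2.val : ℝ) + 1 else 0

lemma sparseEntry_ne_zero {e : Fin q × Fin N} : sparseEntry e ≠ 0 ↔ e.1.val = 0 := by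
  unfold sparseEntry
  split_ifs with h
  · simp only [h, iff_true]
    positivity
  · simp [h]

lemma uniformProb_sparseEntry_ne_zero [NeZero q] [NeZero N] :
    uniformProb (fun e : Fin q × Fin N => sparseEntry e ≠ 0) = 1 / q := by
  have hset : (Finset.univ.filter fun e : Fin q × Fin N => e.1.val = 0)
      = {0} ×ˢ Finset.univ := by
    ext e
    simp only [Finset.mem_filter_univ, Finset.mem_product, Finset.mem_singleton, Finset.mem_univ,
      and_true, Fin.val_eq_zero_iff]
  have hN : (N : ℝ) ≠ 0 := NeZero.ne _
  simp only [sparseEntry_ne_zero, uniformProb_eq_card_div_card, hset, Finset.card_product,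
    Finset.card_singleton, Finset.card_univ, Fintype.card_prod, Fintype.card_fin]
  push_cast
  field_simp

lemma uniformProb_sparseEntry_eq_le [NeZero q] {c : ℝ} (hc : c ≠ 0) :
    uniformProb (fun e : Fin q × Fin N => sparseEntry e = c) ≤ 1 / N := by
  have hcard : (Finset.univ.filter fun e : Fin q × Fin N => sparseEntry e = c).card ≤ 1 := by
    refine Finset.card_le_one.2 fun e he e' he' => ?_
    rw [Finset.mem_filter_univ] at he he'
    have h0 := sparseEntry_ne_zero.1 (he.trans_ne hc)
    have h0' := sparseEntry_ne_zero.1 (he'.trans_ne hc)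
    have hval : e.2.val = e'.2.val := by
      simpa [sparseEntry, h0, h0'] using he.trans he'.symm
    exact Prod.ext (Fin.ext (h0.trans h0'.symm)) (Fin.ext hval)
  calc _ ≤ (1 : ℝ) / (q * N) := by
        rw [uniformProb_eq_card_div_card, Fintype.card_prod, Fintype.card_fin, Fintype.card_fin,
          Nat.cast_mul]
        gcongr
        exact_mod_cast hcard
    _ = 1 / q * (1 / N) := by rw [one_div_mul_one_div]
    _ ≤ 1 * (1 / N) := by
        gcongr
        exact (div_le_one (by exact_mod_cast NeZero.pos q)).2 (by exact_mod_cast NeZero.one_le)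
    _ = 1 / N := one_mul _

lemma uniformProb_sparse_coverDecoder_ne_rsupp_le {m n k : ℕ} (hk : 0 < k) [NeZero N]
    {x : Fin n → ℝ} (hx : (rsupp x).card ≤ k) :
    uniformProb (fun ω : Fin m → Fin n → Fin (2 * k) × Fin N =>
        coverDecoder (randomMatrix sparseEntry ω) (nzVec ((randomMatrix sparseEntry ω).mulVec x))
          ≠ rsupp x)
      ≤ m * n / N + n * Real.exp (-(m / (4 * k))) := by
  have : NeZero (2 * k) := ⟨by omega⟩
  have hcard (S : Finset (Fin n)) : S.card ≤ n := S.card_le_univ.trans_eq (Fintype.card_fin n)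
  have hmiss := one_sub_mul_pow_le_exp (m := m) hk hx
  calc _ ≤ m * (rsupp x).card * (1 / N : ℝ) + (rsupp x)ᶜ.card
          * (1 - 1 / (2 * k) * (1 - 1 / (2 * k)) ^ (rsupp x).card : ℝ) ^ m := by
        simpa using uniformProb_coverDecoder_ne_rsupp_le (E := Fin (2 * k) × Fin N) (m := m)
          uniformProb_sparseEntry_ne_zero (fun _ => uniformProb_sparseEntry_eq_le) x
    _ ≤ m * n * (1 / N) + n * Real.exp (-(m / (4 * k))) := by
        refine add_le_add ?_ ((mul_le_mul_of_nonneg_left hmiss (Nat.cast_nonneg _)).trans ?_)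
        all_goals gcongr; exact hcard _
    _ = m * n / N + n * Real.exp (-(m / (4 * k))) := by rw [mul_one_div]

end SparseEntry

theorem edocs_EE_probabilistic_exact_support_recovery_general
    {k : ℕ} (hk : 0 < k) (m n : ℕ) {ε : ℝ} (hε : 0 < ε) :
    ∃ (s : Finset (Matrix (Fin m) (Fin n) ℝ))
      (μ : Matrix (Fin m) (Fin n) ℝ → ℝ)
      (f : Matrix (Fin m) (Fin n) ℝ → (Fin m → Bool) → Finset (Fin n)),
      (∀ B, 0 ≤ μ B) ∧ (∀ B ∉ s, μ B = 0) ∧ (∑ B ∈ s, μ B) = 1 ∧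
      ∀ x : Fin n → ℝ, (rsupp x).card ≤ k →
        (∑ B ∈ s, if f B (nzVec (B.mulVec x)) ≠ rsupp x then μ B else 0)
          ≤ n * Real.exp (-(m / (4 * k))) + ε := by
  obtain ⟨N, hN⟩ := exists_nat_gt ((m * n : ℝ) / ε)
  have hN0 : (0 : ℝ) < N := lt_of_le_of_lt (by positivity) hN
  have : NeZero N := ⟨by exact_mod_cast hN0.ne'⟩
  have : Nonempty (Fin (2 * k) × Fin N) := ⟨⟨0, by omega⟩, 0⟩
  let A : (Fin m → Fin n → Fin (2 * k) × Fin N) → Matrix (Fin m) (Fin n) ℝ :=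
    randomMatrix sparseEntry
  refine ⟨Finset.univ.image A, fun B => uniformProb fun ω => A ω = B, coverDecoder,
    fun B => uniformProb_nonneg _, fun B hB => uniformProb_eq_zero (by simpa using hB), ?_,
    fun x hx => ?_⟩
  · simpa [uniformProb_true] using sum_image_ite_uniformProb_eq A fun _ => True
  · refine (sum_image_ite_uniformProb_eq A fun B =>
      coverDecoder B (nzVec (B.mulVec x)) ≠ rsupp x).trans_le ?_
    have hN' : (m * n : ℝ) / N ≤ ε := ((div_lt_comm₀ hε hN0).1 hN).le
    linarith [uniformProb_sparse_coverDecoder_ne_rsupp_le (m := m) (N := N) hk hx]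

lemma natCast_le_exp_clog (n : ℕ) : (n : ℝ) ≤ Real.exp (Nat.clog 2 n) := calc
  (n : ℝ) ≤ 2 ^ Nat.clog 2 n := by exact_mod_cast Nat.le_pow_clog one_lt_two n
  _ ≤ Real.exp 1 ^ Nat.clog 2 n := by
    gcongr
    linarith [Real.add_one_le_exp 1]
  _ = Real.exp (Nat.clog 2 n) := by rw [← Real.exp_nat_mul, mul_one]

lemma mul_exp_neg_div_le_one_div_cube {k m n : ℕ} (hk : 0 < k) (hn : 0 < n)
    (hm : 16 * k * Nat.clog 2 n ≤ m) :
    n * Real.exp (-(m / (4 * k))) ≤ 1 / (n : ℝ) ^ 3 := by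
  have hrate : (4 * Nat.clog 2 n : ℝ) ≤ m / (4 * k) := by
    rw [le_div_iff₀ (by positivity)]
    have : ((16 * k * Nat.clog 2 n : ℕ) : ℝ) ≤ m := by exact_mod_cast hm
    push_cast at this
    linarith
  calc n * Real.exp (-(m / (4 * k))) ≤ n * Real.exp (-(4 * Nat.clog 2 n)) := by gcongr
    _ = n * (1 / Real.exp (Nat.clog 2 n) ^ 4) := by
        rw [Real.exp_neg, ← Real.exp_nat_mul, one_div]
        norm_num
    _ ≤ n * (1 / (n : ℝ) ^ 4) := by
        gcongr
        exact natCast_le_exp_clog n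
    _ = 1 / (n : ℝ) ^ 3 := by field_simp

lemma mul_exp_neg_div_add_le_five_div_cube {k m n : ℕ} (hk : 0 < k) (hkn : k ≤ n)
    (hm : 16 * k * Nat.clog 2 n ≤ m) :
    n * Real.exp (-(m / (4 * k))) + 1 / (k : ℝ) ^ 3 ≤ 5 / (k : ℝ) ^ 3 := calc
  n * Real.exp (-(m / (4 * k))) + 1 / (k : ℝ) ^ 3
    ≤ 1 / (n : ℝ) ^ 3 + 1 / (k : ℝ) ^ 3 := by
      gcongr
      exact mul_exp_neg_div_le_one_div_cube hk (hk.trans_le hkn) hm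
  _ ≤ 1 / (k : ℝ) ^ 3 + 1 / (k : ℝ) ^ 3 := by gcongr
  _ ≤ 5 / (k : ℝ) ^ 3 := by
      rw [← add_div]
      gcongr
      norm_num

lemma one_le_ceil_log_div_log_log {α y : ℝ} (hα : 0 < α) (hy : Real.exp 1 < y) :
    1 ≤ ⌈α * Real.log y / Real.log (Real.log y)⌉₊ := by
  have hlog : 1 < Real.log y := (Real.lt_log_iff_exp_lt ((Real.exp_pos 1).trans hy)).2 hy
  have hloglog := Real.log_pos hlog
  rw [Nat.one_le_ceil_iff]
  positivity

/-- EDOCS-EE guarantee: probabilistic (for-each) exact support recovery from one-bit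
measurements.  Fix `α > 1` and `δ > 0`, and set
`k_α := ⌈α · log(16k) / log log(16k)⌉`.  For all sufficiently large `k` and all
`n ≥ k`, with `m := 16 · k_α · k · ⌈log₂ n⌉` measurements, there are a finitely
supported probability distribution `μ` over sensing matrices `A ∈ ℝ^{m×n}` and a
decoding map `f` such that, for every fixed signal `x` with `1 ≤ |supp(x)| ≤ k`, the
probability over `A ∼ μ` that `f(A, nz(Ax)) ≠ supp(x)` is at most
`⌈log₂ n⌉ · (16k)^{1−α+δ} + e^{−k} + n^{−k} + 5k^{−3}`. -/
theorem edocs_EE_probabilistic_exact_support_recovery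
    (α δ : ℝ) (hα : 1 < α) (hδ : 0 < δ) :
    ∃ k₀ : ℕ, ∀ k n : ℕ, k₀ ≤ k → k ≤ n →
      ∀ m : ℕ,
        m = 16 * ⌈α * Real.log (16 * k) / Real.log (Real.log (16 * k))⌉₊ * k
              * Nat.clog 2 n →
        ∃ (s : Finset (Matrix (Fin m) (Fin n) ℝ))
          (μ : Matrix (Fin m) (Fin n) ℝ → ℝ)
          (f : Matrix (Fin m) (Fin n) ℝ → (Fin m → Bool) → Finset (Fin n)),
          (∀ B, 0 ≤ μ B) ∧ (∀ B ∉ s, μ B = 0) ∧ (∑ B ∈ s, μ B) = 1 ∧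
          ∀ x : Fin n → ℝ, 1 ≤ (rsupp x).card → (rsupp x).card ≤ k →
            (∑ B ∈ s, if f B (nzVec (B.mulVec x)) ≠ rsupp x then μ B else 0)
              ≤ (Nat.clog 2 n : ℝ) * (16 * (k : ℝ)) ^ (1 - α + δ)
                  + Real.exp (-(k : ℝ)) + (n : ℝ) ^ (-(k : ℝ)) + 5 / (k : ℝ) ^ 3 := by
  refine ⟨1, fun k n hk hkn m hm => ?_⟩
  have hk' : (1 : ℝ) ≤ k := by exact_mod_cast hk
  have hkα := one_le_ceil_log_div_log_log (zero_lt_one.trans hα)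
    (show Real.exp 1 < 16 * k by linarith [Real.exp_one_lt_three])
  have hm' : 16 * k * Nat.clog 2 n ≤ m := by
    rw [hm]
    gcongr
    exact Nat.le_mul_of_pos_right 16 hkα
  obtain ⟨s, μ, f, hμ, hμs, hsum, hfail⟩ :=
    edocs_EE_probabilistic_exact_support_recovery_general hk m n
      (show (0 : ℝ) < 1 / k ^ 3 by positivity)
  refine ⟨s, μ, f, hμ, hμs, hsum, fun x _ hx => (hfail x hx).trans ?_⟩
  exact (mul_exp_neg_div_add_le_five_div_cube hk hkn hm').trans
    (le_add_of_nonneg_left (by positivity))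

end
end
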